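/- There exists a non-increasing sequence (u_n)_{n≥1} of positive real numbers which is dominatedly varying, i.e. limsup_n u_{⌊nt⌋}/u_n < ∞ for every t ∈ (0,1], but which satisfies liminf_n u_{n+1}/u_n ≤ 1/2; in particular (u_n) is not regularly varying, i.e. there is no α ∈ ℝ such that u_{⌊nt⌋}/u_n → t^{−α} for all t > 0. Such a sequence can be obtained as u_n = c_n/n where (c_n) is a sequence with 1 ≤ c_n ≤ 2 for all n, c_{n+1} ≤ (1 + 1/n)·c_n for all n ≥ 1, and such that for every ε > 0 there exist infinitely many n with c_n ≥ 2 − ε and c_{n+1} = 1. -/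

import Mathlib

/-!
The witness is `u n = 2 ^ (-⌊log₂ n⌋)`, that is `c n = n / 2 ^ ⌊log₂ n⌋`. The sequence `u` is constant
on each dyadic block `[2 ^ k, 2 ^ (k + 1))` and halves at the start of the next one, while `c` climbs
from `1` to `2 - 2 ^ (-k)` over the block and drops back to `1`. The bounds `1 / n ≤ u n ≤ 2 / n` give
`u ⌊n t⌋ / u n ≤ 4 / t` for large `n`, hence dominated variation. If `u` were regularly varying with
index `α`, then along `n = 2 ^ (k + 1)` the ratio is `1` for `t = 3 / 2`, which forces `α = 0`, and it is
`1 / 2` for `t = 2`, which forces `2 ^ (-α) = 1 / 2`.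
-/

open MeasureTheory Filter Topology
open scoped ENNReal NNReal

noncomputable section

/-- A (non-increasing, positive) sequence `u` is dominatedly varying if
`limsup_n u ⌊nt⌋ / u n < ∞` for every `t ∈ (0,1]`. -/
def DomVarying (u : ℕ → ℝ) : Prop :=
  ∀ t ∈ Set.Ioc (0:ℝ) 1,
    Filter.limsup (fun n : ℕ => ENNReal.ofReal (u ⌊(n:ℝ) * t⌋₊ / u n)) Filter.atTop < ⊤

/-- The sequence `2 ^ (-⌊log₂ n⌋)`; its value at `0` is `1`, since `Nat.log 2 0 = 0`. -/
def dyadicStep (n : ℕ) : ℝ := 1 / 2 ^ Nat.log 2 n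

lemma dyadicStep_pos (n : ℕ) : 0 < dyadicStep n := by
  unfold dyadicStep; positivity

lemma dyadicStep_anti {m n : ℕ} (h : m ≤ n) : dyadicStep n ≤ dyadicStep m := by
  unfold dyadicStep
  have := Nat.log_mono_right (b := 2) h
  gcongr
  norm_num

lemma one_le_mul_dyadicStep {n : ℕ} (hn : 1 ≤ n) : 1 ≤ (n : ℝ) * dyadicStep n := by
  have h : 2 ^ Nat.log 2 n ≤ n := Nat.pow_log_le_self 2 (by lia)
  have h' : (2 : ℝ) ^ Nat.log 2 n ≤ n := by exact_mod_cast h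
  unfold dyadicStep
  rw [mul_one_div, le_div_iff₀ (by positivity)]
  linarith

lemma mul_dyadicStep_le_two (n : ℕ) : (n : ℝ) * dyadicStep n ≤ 2 := by
  have h : n < 2 ^ (Nat.log 2 n + 1) := Nat.lt_pow_succ_log_self (by norm_num) n
  have h' : (n : ℝ) < 2 ^ (Nat.log 2 n + 1) := by exact_mod_cast h
  unfold dyadicStep
  rw [mul_one_div, div_le_iff₀ (by positivity)]
  rw [pow_succ] at h'
  linarith

lemma dyadicStep_of_mem_block {k n : ℕ} (h₁ : 2 ^ k ≤ n) (h₂ : n < 2 ^ (k + 1)) :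
    dyadicStep n = 1 / 2 ^ k := by
  unfold dyadicStep
  rw [Nat.log_eq_of_pow_le_of_lt_pow h₁ h₂]

lemma dyadicStep_two_pow (k : ℕ) : dyadicStep (2 ^ k) = 1 / 2 ^ k :=
  dyadicStep_of_mem_block le_rfl (Nat.pow_lt_pow_right (by norm_num) (by lia))

lemma dyadicStep_block_end (k : ℕ) : dyadicStep (2 ^ (k + 1) - 1) = 1 / 2 ^ k := by
  have := Nat.one_le_two_pow (n := k)
  apply dyadicStep_of_mem_block <;> rw [pow_succ] <;> lia

lemma domVarying_dyadicStep : DomVarying dyadicStep := by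
  rintro t ⟨ht, -⟩
  refine lt_of_le_of_lt (b := ENNReal.ofReal (4 / t)) ?_ ENNReal.ofReal_lt_top
  refine limsup_le_of_le (by isBoundedDefault) ?_
  have hlarge : ∀ᶠ n : ℕ in atTop, 1 / t ≤ (n : ℝ) :=
    tendsto_natCast_atTop_atTop.eventually_ge_atTop _
  filter_upwards [hlarge, eventually_ge_atTop 1] with n hn hn1
  apply ENNReal.ofReal_le_ofReal
  have hnt : 1 ≤ (n : ℝ) * t := by rwa [div_le_iff₀ ht] at hn
  have hm : 1 ≤ ⌊(n : ℝ) * t⌋₊ := Nat.le_floor (by simpa using hnt)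
  have hlt := Nat.lt_floor_add_one ((n : ℝ) * t)
  have hup := mul_dyadicStep_le_two ⌊(n : ℝ) * t⌋₊
  have hlow := one_le_mul_dyadicStep hn1
  have hmpos := dyadicStep_pos ⌊(n : ℝ) * t⌋₊
  have hm' : (1 : ℝ) ≤ ⌊(n : ℝ) * t⌋₊ := by exact_mod_cast hm
  generalize ⌊(n : ℝ) * t⌋₊ = m at *
  -- Since `m ≥ 1` and `n t < m + 1`, one has `n t ≤ 2 m`, so `n t u_m ≤ 4 ≤ 4 n u_n`.
  have key : (n : ℝ) * t * dyadicStep m ≤ n * (4 * dyadicStep n) := by nlinarith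
  have hn0 : (0 : ℝ) < n := by exact_mod_cast hn1
  rw [mul_assoc] at key
  have := le_of_mul_le_mul_left key hn0
  rw [div_le_div_iff₀ (dyadicStep_pos n) ht]
  linarith

lemma not_regularlyVarying_dyadicStep : ¬ ∃ α : ℝ, ∀ t : ℝ, 0 < t →
    Tendsto (fun n : ℕ => dyadicStep ⌊(n : ℝ) * t⌋₊ / dyadicStep n) atTop (𝓝 (t ^ (-α))) := by
  rintro ⟨α, h⟩
  have hpow : Tendsto (fun k : ℕ => 2 ^ (k + 1)) atTop (atTop : Filter ℕ) :=
    (tendsto_pow_atTop_atTop_of_one_lt (by norm_num)).comp (tendsto_add_atTop_nat 1)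
  have h₁ : ((3 / 2 : ℝ)) ^ (-α) = 1 := by
    refine tendsto_nhds_unique ((h (3 / 2) (by norm_num)).comp hpow) ?_
    refine tendsto_const_nhds.congr fun k => ?_
    have hfl : ⌊((2 ^ (k + 1) : ℕ) : ℝ) * (3 / 2)⌋₊ = 3 * 2 ^ k := by
      rw [show ((2 ^ (k + 1) : ℕ) : ℝ) * (3 / 2) = ((3 * 2 ^ k : ℕ) : ℝ) by push_cast; ring]
      exact Nat.floor_natCast _
    have hpos := Nat.one_le_two_pow (n := k)
    have hblock : dyadicStep (3 * 2 ^ k) = 1 / 2 ^ (k + 1) := by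
      apply dyadicStep_of_mem_block <;> simp only [pow_succ] <;> lia
    simp only [Function.comp_apply]
    rw [hfl, hblock, dyadicStep_two_pow, div_self (by positivity)]
  have h₂ : (2 : ℝ) ^ (-α) = 1 / 2 := by
    refine tendsto_nhds_unique ((h 2 (by norm_num)).comp hpow) ?_
    refine tendsto_const_nhds.congr fun k => ?_
    have hfl : ⌊((2 ^ (k + 1) : ℕ) : ℝ) * 2⌋₊ = 2 ^ (k + 2) := by
      rw [show ((2 ^ (k + 1) : ℕ) : ℝ) * 2 = ((2 ^ (k + 2) : ℕ) : ℝ) by push_cast; ring]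
      exact Nat.floor_natCast _
    simp only [Function.comp_apply]
    rw [hfl, dyadicStep_two_pow, dyadicStep_two_pow]
    field_simp
    ring
  have hα : -α = 0 := by
    have hlog := congrArg Real.log h₁
    rw [Real.log_rpow (by norm_num), Real.log_one] at hlog
    exact (mul_eq_zero.mp hlog).resolve_right (Real.log_pos (by norm_num)).ne'
  rw [hα, Real.rpow_zero] at h₂
  norm_num at h₂

/-- There is a non-increasing positive sequence which is dominatedly varying
but has `liminf u_{n+1}/u_n ≤ 1/2`, hence is not regularly varying; it can be obtained as
`u_n = c_n/n` with `1 ≤ c_n ≤ 2`, `c_{n+1} ≤ (1+1/n) c_n`, and infinitely many `n` with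
`c_n ≥ 2 - ε` and `c_{n+1} = 1`, for each `ε > 0`. -/
theorem statement_8 :
    ∃ u c : ℕ → ℝ,
      (∀ n : ℕ, 1 ≤ n → u n = c n / n) ∧
      (∀ n : ℕ, 1 ≤ n → 1 ≤ c n ∧ c n ≤ 2) ∧
      (∀ n : ℕ, 1 ≤ n → c (n + 1) ≤ (1 + 1 / (n : ℝ)) * c n) ∧
      (∀ ε : ℝ, 0 < ε → ∀ N : ℕ, ∃ n : ℕ, N ≤ n ∧ 1 ≤ n ∧ 2 - ε ≤ c n ∧ c (n + 1) = 1) ∧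
      (∀ n : ℕ, 1 ≤ n → 0 < u n) ∧
      (∀ n : ℕ, 1 ≤ n → u (n + 1) ≤ u n) ∧
      DomVarying u ∧
      Filter.liminf (fun n : ℕ => u (n + 1) / u n) Filter.atTop ≤ 1 / 2 ∧
      ¬ ∃ α : ℝ, ∀ t : ℝ, 0 < t →
          Tendsto (fun n : ℕ => u ⌊(n:ℝ) * t⌋₊ / u n) atTop (𝓝 (t ^ (-α))) := by
  -- The last index of the `k`-th dyadic block is `2 ^ (k + 1) - 1`.
  have hsucc : ∀ k : ℕ, 2 ^ (k + 1) - 1 + 1 = 2 ^ (k + 1) := fun k =>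
    Nat.sub_add_cancel Nat.one_le_two_pow
  have hbig : ∀ k : ℕ, k + 1 ≤ 2 ^ (k + 1) - 1 := fun k =>
    Nat.le_sub_one_of_lt Nat.lt_two_pow_self
  refine ⟨dyadicStep, fun n => n * dyadicStep n, ?_, ?_, ?_, ?_, fun n _ => dyadicStep_pos n,
    fun n _ => dyadicStep_anti n.le_succ, domVarying_dyadicStep, ?_,
    not_regularlyVarying_dyadicStep⟩
  · intro n hn
    have : (n : ℝ) ≠ 0 := by positivity
    field_simp
  · exact fun n hn => ⟨one_le_mul_dyadicStep hn, mul_dyadicStep_le_two n⟩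
  · intro n hn
    have : (n : ℝ) ≠ 0 := by positivity
    have hrw : (1 + 1 / (n : ℝ)) * (n * dyadicStep n) = ((n + 1 : ℕ) : ℝ) * dyadicStep n := by
      push_cast
      field_simp
    simp only [hrw]
    exact mul_le_mul_of_nonneg_left (dyadicStep_anti n.le_succ) (by positivity)
  · intro ε hε N
    obtain ⟨K, hK⟩ := exists_pow_lt_of_lt_one hε (show (1 / 2 : ℝ) < 1 by norm_num)
    have hk : (1 / 2 : ℝ) ^ (max K N) < ε :=
      (pow_le_pow_of_le_one (by norm_num) (by norm_num) (le_max_left K N)).trans_lt hK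
    have hN := le_max_right K N
    generalize max K N = k at hk hN
    have hb := hbig k
    refine ⟨2 ^ (k + 1) - 1, by lia, by lia, ?_, ?_⟩
    · have hcast : ((2 ^ (k + 1) - 1 : ℕ) : ℝ) = 2 ^ (k + 1) - 1 := by
        rw [Nat.cast_sub Nat.one_le_two_pow]
        push_cast
        rfl
      simp only [dyadicStep_block_end, hcast]
      have hval : ((2 : ℝ) ^ (k + 1) - 1) * (1 / 2 ^ k) = 2 - (1 / 2) ^ k := by
        rw [one_div_pow]
        field_simp
        ring
      linarith
    · simp only [hsucc, dyadicStep_two_pow]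
      push_cast
      field_simp
  · refine liminf_le_of_frequently_le ?_ ?_
    · rw [frequently_atTop]
      intro N
      have hb := hbig N
      refine ⟨2 ^ (N + 1) - 1, by lia, ?_⟩
      simp only [hsucc, dyadicStep_two_pow, dyadicStep_block_end]
      apply le_of_eq
      field_simp
      ring
    · exact isBoundedUnder_of ⟨0, fun n => (div_pos (dyadicStep_pos _) (dyadicStep_pos _)).le⟩
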